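/- Fix n ≥ 1, ε ≥ 0, and δ ≥ 0. If a randomized algorithm B : {0,1}^n → PMF({0,1}) is (ε,δ)-differentially private with respect to Hamming-neighboring inputs, then for every coordinate i ∈ [n], when X is sampled uniformly at random from {0,1}^n, the probability (over both X and the randomness of B) that B(X) ≠ X_i is at least (1 − δ) / (1 + e^ε). -/

import Mathlib

/-! Flipping bit `i` is an involution of the cube that moves every input to a neighbor.  Write
`w x` for the probability that `B x` errs on bit `i`.  Privacy for the event that the output
equals `x i`, which is an error on the flipped input `x'`, gives `1 - w x ≤ e^ε * w x' + δ`.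
Summing over the cube and reindexing by the involution turns this into
`2^n - W ≤ e^ε * W + δ * 2^n`, where `W = ∑ x, w x`, and this rearranges to the claim. -/

open scoped ENNReal NNReal

/-- The probability that a sample from `p` lands in the set `S`. -/
noncomputable def prob {Y : Type*} (p : PMF Y) (S : Set Y) : ℝ≥0∞ :=
  p.toOuterMeasure S

/-- `A` is `(ε,δ)`-differentially private with respect to the neighboring relation `N`. -/
def IsDP {X Y : Type*} (N : X → X → Prop) (A : X → PMF Y) (ε δ : ℝ) : Prop :=
  ∀ x x', N x x' → ∀ S : Set Y,
    prob (A x) S ≤ ENNReal.ofReal (Real.exp ε) * prob (A x') S + ENNReal.ofReal δ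

/-- Two bit strings are Hamming-neighboring if they differ in exactly one coordinate. -/
def HammingNeighbor {n : ℕ} (x y : Fin n → Bool) : Prop :=
  hammingDist x y = 1

/-- The bit string `x` with its `i`-th bit negated. -/
def flipBit {n : ℕ} (i : Fin n) (x : Fin n → Bool) : Fin n → Bool :=
  Function.update x i (!(x i))

theorem flipBit_involutive {n : ℕ} (i : Fin n) : Function.Involutive (flipBit i) := by
  intro x
  simp [flipBit]

theorem hammingNeighbor_flipBit {n : ℕ} (i : Fin n) (x : Fin n → Bool) :
    HammingNeighbor x (flipBit i x) := by
  unfold HammingNeighbor hammingDist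
  rw [Finset.card_eq_one]
  refine ⟨i, ?_⟩
  ext j
  rw [Finset.mem_filter, Finset.mem_singleton]
  by_cases h : j = i
  · subst h
    simp [flipBit]
  · simp [flipBit, h]

theorem toReal_add_toReal_not (p : PMF Bool) (b : Bool) :
    (p b).toReal + (p (!b)).toReal = 1 := by
  have h := p.tsum_coe
  rw [tsum_fintype, Fintype.sum_bool] at h
  rw [← ENNReal.toReal_add (p.apply_ne_top _) (p.apply_ne_top _)]
  cases b
  · simp [add_comm (p false), h]
  · simp [h]

/-- Privacy for a singleton event, as an inequality of real numbers. -/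
theorem IsDP.toReal_le {X Y : Type*} {N : X → X → Prop} {A : X → PMF Y} {ε δ : ℝ}
    (hDP : IsDP N A ε δ) (hδ : 0 ≤ δ) {x x' : X} (h : N x x') (y : Y) :
    (A x y).toReal ≤ Real.exp ε * (A x' y).toReal + δ := by
  have h1 := hDP x x' h {y}
  simp only [prob, PMF.toOuterMeasure_apply_singleton] at h1
  have h2 : ENNReal.ofReal (Real.exp ε) * A x' y ≠ ⊤ :=
    ENNReal.mul_ne_top ENNReal.ofReal_ne_top ((A x').apply_ne_top y)
  have h3 := ENNReal.toReal_mono (ENNReal.add_ne_top.2 ⟨h2, ENNReal.ofReal_ne_top⟩) h1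
  rwa [ENNReal.toReal_add h2 ENNReal.ofReal_ne_top, ENNReal.toReal_mul,
    ENNReal.toReal_ofReal (Real.exp_pos ε).le, ENNReal.toReal_ofReal hδ] at h3

/-- **Limits of reidentification, single bit.**  If `B : {0,1}^n → PMF({0,1})` is
`(ε,δ)`-differentially private with respect to Hamming neighbors, then for every coordinate
`i`, the probability over a uniformly random input `X` and the randomness of `B` that
`B(X) ≠ X_i` is at least `(1-δ)/(1+e^ε)`. -/
theorem reidentification_single_bit (n : ℕ) (hn : 1 ≤ n) (ε δ : ℝ) (hε : 0 ≤ ε) (hδ : 0 ≤ δ)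
    (B : (Fin n → Bool) → PMF Bool)
    (hDP : IsDP (fun x y => HammingNeighbor x y) B ε δ) :
    ∀ i : Fin n,
      (1 - δ) / (1 + Real.exp ε) ≤
        (∑ x : Fin n → Bool, ((B x) (!(x i))).toReal) / (2 : ℝ) ^ n := by
  intro i
  set w : (Fin n → Bool) → ℝ := fun x => ((B x) (!(x i))).toReal with hw
  have key : ∀ x, 1 - w x ≤ Real.exp ε * w (flipBit i x) + δ := by
    intro x
    have h1 := hDP.toReal_le hδ (hammingNeighbor_flipBit i x) (x i)
    have h2 := toReal_add_toReal_not (B x) (x i)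
    have h3 : w (flipBit i x) = (B (flipBit i x) (x i)).toReal := by
      have h4 : (!(flipBit i x i)) = x i := by simp [flipBit]
      simp only [hw, h4]
    rw [h3]
    simp only [hw]
    linarith
  have hsum := Finset.sum_le_sum fun x (_ : x ∈ Finset.univ) => key x
  have hre : ∑ x, w (flipBit i x) = ∑ x, w x :=
    Equiv.sum_comp (flipBit_involutive i).toPerm w
  simp only [Finset.sum_sub_distrib, Finset.sum_add_distrib, ← Finset.mul_sum, hre,
    Finset.sum_const, Finset.card_univ, Fintype.card_fun, Fintype.card_bool, Fintype.card_fin,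
    nsmul_eq_mul, Nat.cast_pow, Nat.cast_ofNat, mul_one] at hsum
  rw [div_le_div_iff₀ (by positivity) (by positivity)]
  linarith
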